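/- Let n ≥ 2, let M be the position matrix of a single-shelf shuffle, let B be the n×n matrix with B(k,j) = (k−1)^{\underline{j−1}}, and set T = B^{−1} M B, with rows and columns of T indexed by 0 ≤ t,u ≤ n−1. For each even integer i with 0 ≤ i ≤ n−1, define w̃^{(i)} ∈ ℝ^n by w̃^{(i)}_t = 0 for t < i and w̃^{(i)}_t = (1/(t−i+1)) binom(t,i) (n−1−i)!/(n−1−t)! for i ≤ t ≤ n−1. Then (w̃^{(i)})^⊤ T = 2^{−i} (w̃^{(i)})^⊤, and moreover for any two even integers i, j with 0 ≤ i, j ≤ n−1 one has ⟨w̃^{(i)}, w^{(j)}⟩ = δ_{i,j}, where w^{(j)} ∈ ℝ^n is given by w^{(j)}_t = 2^{j−t} B_{j−t} binom(j,t) (n−t−1)!/(n−j−1)! for 0 ≤ t ≤ j and w^{(j)}_t = 0 for t > j. -/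

import Mathlib

/-!
The matrix `M` acts on functions of the position by binomial sums. In the basis of falling factorials
`j ↦ j(j-1)⋯(j-u+1)` the first summand of `M` is diagonal (`sum_choose_mul_descFactorial`), while the
second one is the first composed with the reflection `j ↦ n - 1 - j`, whose effect on falling
factorials is a Newton expansion (`choose_sub_eq_sum`). Hence `M B = B T` with the explicit upper
triangular matrix `T = shelfT n` (`shelfM_mul_Bmat`), and `B` is lower triangular with nonzero diagonal.

With `T` explicit, the factorials in each summand of `w̃ᵀ T` regroup into a constant times
`C(m+1, s+1) (-1/2)^s`, where `m = u - i` and `s = t - i`, and the binomial theorem at `1 - 1/2` gives the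
eigenvector equation. In the same way the pairing of `w̃^{(i)}` and `w^{(j)}` is a constant times
`∑_{k ≤ m} C(m+1, k) 2^k B_k` with `m = j - i`, that is, `2^{m+1} (B_{m+1}(1/2) - B_{m+1})`. As `m` is
even, both Bernoulli terms vanish unless `m = 0` (`sum_choose_mul_bernoulli`).
-/

open Matrix BigOperators

/-- Position matrix of a single-shelf shuffle on `n` cards (0-indexed). -/
noncomputable def shelfM (n : ℕ) : Matrix (Fin n) (Fin n) ℝ :=
  fun i j => (1/2 : ℝ)^(i.val + 1) *
    ((Nat.choose i.val j.val : ℝ) + (Nat.choose i.val (n - 1 - j.val) : ℝ))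

/-- The change-of-basis matrix `B(k,j) = (k-1)^{\underline{j-1}}` (0-indexed). -/
def Bmat (n : ℕ) : Matrix (Fin n) (Fin n) ℝ :=
  fun k j => (Nat.descFactorial k.val j.val : ℝ)

/-- The right eigenvector `w^{(i)}` of `T` (coordinates indexed by `0 ≤ t ≤ n-1`). -/
noncomputable def wVec (n i : ℕ) : Fin n → ℝ :=
  fun t => if t.val ≤ i then
      (2 : ℝ)^(i - t.val) * ((bernoulli (i - t.val) : ℚ) : ℝ) * (Nat.choose i t.val : ℝ) *
        (Nat.factorial (n - t.val - 1) : ℝ) / (Nat.factorial (n - i - 1) : ℝ)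
    else 0

/-- The left eigenvector `w̃^{(i)}` of `T`:
`w̃^{(i)}_t = (1/(t-i+1)) C(t,i) (n-1-i)!/(n-1-t)!` for `t ≥ i`, `0` for `t < i`. -/
noncomputable def wTil (n i : ℕ) : Fin n → ℝ :=
  fun t => if i ≤ t.val then
      ((t.val - i + 1 : ℕ) : ℝ)⁻¹ * (Nat.choose t.val i : ℝ) *
        (Nat.factorial (n - 1 - i) : ℝ) / (Nat.factorial (n - 1 - t.val) : ℝ)
    else 0

/-! ### Binomial sums of falling factorials -/

open Finset in
/-- Falling factorials are eigenfunctions of the binomial sum `f ↦ ∑ j, C(k,j) f(j)` up to the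
factor `2 ^ k`. -/
lemma sum_choose_mul_descFactorial (k s : ℕ) :
    ∑ j ∈ range (k + 1), (k.choose j : ℝ) * (j.descFactorial s : ℝ)
      = (k.descFactorial s : ℝ) * 2 ^ k * (1 / 2) ^ s := by
  induction s generalizing k with
  | zero =>
    have := Nat.sum_range_choose k
    simp only [Nat.descFactorial_zero, Nat.cast_one, mul_one, pow_zero, one_mul]
    exact_mod_cast this
  | succ s ih =>
    cases k with
    | zero => simp
    | succ k =>
      rw [sum_range_succ']
      have h : ∀ j ∈ range (k + 1),
          ((k + 1).choose (j + 1) : ℝ) * ((j + 1).descFactorial (s + 1) : ℝ)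
            = (k + 1) * ((k.choose j : ℝ) * (j.descFactorial s : ℝ)) := by
        intro j _
        have h1 : ((k : ℝ) + 1) * k.choose j = (k + 1).choose (j + 1) * (j + 1) := by
          exact_mod_cast Nat.add_one_mul_choose_eq k j
        rw [Nat.succ_descFactorial_succ]
        push_cast
        linear_combination -(j.descFactorial s : ℝ) * h1
      rw [sum_congr rfl h, ← mul_sum, ih, Nat.succ_descFactorial_succ]
      simp
      ring

open Finset in
lemma sum_range_choose_mul_descFactorial {n k : ℕ} (hk : k < n) (s : ℕ) :
    ∑ j ∈ range n, (k.choose j : ℝ) * (j.descFactorial s : ℝ)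
      = (k.descFactorial s : ℝ) * 2 ^ k * (1 / 2) ^ s := by
  rw [← sum_choose_mul_descFactorial k s]
  symm
  apply sum_subset
  · intro x; simp; omega
  · intro x _ hx
    simp at hx
    rw [Nat.choose_eq_zero_of_lt (by omega)]
    simp

open Finset in
/-- Newton expansion of `j ↦ C(N - j, u)` in the basis `C(j, s)`. -/
lemma choose_sub_eq_sum (j N u : ℕ) (hj : j ≤ N) :
    ((N - j).choose u : ℝ) =
      ∑ s ∈ range (u + 1), (-1) ^ s * ((N - s).choose (u - s) : ℝ) * (j.choose s : ℝ) := by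
  induction j generalizing N u with
  | zero => rw [sum_range_succ']; simp
  | succ j ih =>
    obtain ⟨N, rfl⟩ : ∃ N', N = N' + 1 := ⟨N - 1, by omega⟩
    cases u with
    | zero => simp
    | succ u =>
      have h1 := ih (N + 1) (u + 1) (by omega)
      have h2 := ih N u (by omega)
      -- Pascal's rule on both sides reduces the claim to `(N + 1, u + 1)` and `(N, u)`.
      have h3 : ((N + 1 - j).choose (u + 1) : ℝ) = (N - j).choose u + (N - j).choose (u + 1) := by
        rw [show N + 1 - j = N - j + 1 by omega, Nat.choose_succ_succ]
        push_cast; ring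
      rw [sum_range_succ'] at h1 ⊢
      have h4 : ∀ s, (-1 : ℝ) ^ (s + 1) * ((N + 1 - (s + 1)).choose (u + 1 - (s + 1)) : ℝ)
            * ((j + 1).choose (s + 1) : ℝ)
          = (-1) ^ (s + 1) * ((N + 1 - (s + 1)).choose (u + 1 - (s + 1)) : ℝ)
            * (j.choose (s + 1) : ℝ)
            - (-1) ^ s * ((N - s).choose (u - s) : ℝ) * (j.choose s : ℝ) := by
        intro s
        rw [Nat.choose_succ_succ, Nat.add_sub_add_right, Nat.add_sub_add_right]
        push_cast; ring
      simp only [h4, sum_sub_distrib, ← h2]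
      rw [Nat.add_sub_add_right]
      simp only [Nat.choose_zero_right] at h1 ⊢
      linarith

/-! ### The conjugated matrix -/

/-- The explicit form of `B⁻¹ M B`: the action of the shuffle on falling factorials. It is upper
triangular, with diagonal entries `2 ^ (-t)` for even `t` and `0` for odd `t`. -/
noncomputable def shelfT (n : ℕ) : Matrix (Fin n) (Fin n) ℝ :=
  fun t u => (1 / 2 : ℝ) ^ (t.val + 1) * ((if t = u then 1 else 0) +
    if t ≤ u then (-1) ^ t.val * (u.val.factorial : ℝ) / (t.val.factorial : ℝ) *
      ((n - 1 - t.val).choose (u.val - t.val) : ℝ) else 0)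

open Finset in
/-- A sum over `Fin n` supported on `[i, i + m]`. -/
lemma sum_fin_eq_sum_shift {n i m : ℕ} (h : i + m < n) (f : ℕ → ℝ)
    (h1 : ∀ t, t < i → f t = 0) (h2 : ∀ t, i + m < t → f t = 0) :
    ∑ t : Fin n, f t = ∑ s ∈ range (m + 1), f (i + s) := by
  rw [Fin.sum_univ_eq_sum_range]
  symm
  apply sum_of_injOn (fun s => i + s)
  · intro a _ b _ hab; simpa using hab
  · intro a ha; simp at ha ⊢; omega
  · intro t _ ht'
    by_cases hl : t < i
    · exact h1 t hl
    · apply h2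
      by_contra hc
      exact ht' ⟨t - i, by simp; omega, by simp; omega⟩
  · intros; rfl

open Finset in
/-- The reflection `j ↦ n - 1 - j` in the falling factorial basis. -/
lemma descFactorial_reflect {n j u : ℕ} (hj : j < n) (hu : u < n) :
    ((n - 1 - j).descFactorial u : ℝ) = ∑ t : Fin n, (if t.val ≤ u then
      (-1) ^ t.val * (u.factorial : ℝ) / (t.val.factorial : ℝ) *
      ((n - 1 - t.val).choose (u - t.val) : ℝ) else 0) * (j.descFactorial t.val : ℝ) := by
  rw [sum_fin_eq_sum_shift (n := n) (i := 0) (m := u) (by omega)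
    (fun t => (if t ≤ u then (-1) ^ t * (u.factorial : ℝ) / (t.factorial : ℝ) *
      ((n - 1 - t).choose (u - t) : ℝ) else 0) * (j.descFactorial t : ℝ))
    (by simp) (by intro t ht; simp; intro h; omega)]
  rw [Nat.descFactorial_eq_factorial_mul_choose, Nat.cast_mul,
    choose_sub_eq_sum j (n - 1) u (by omega), mul_sum]
  apply sum_congr rfl
  intro s hs
  have hs' : s ≤ u := by simp at hs; omega
  have := Nat.factorial_ne_zero s
  simp only [zero_add, hs', if_true]
  rw [Nat.descFactorial_eq_factorial_mul_choose]
  push_cast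
  field_simp

open Finset in
lemma shelfM_mul_Bmat (n : ℕ) : shelfM n * Bmat n = Bmat n * shelfT n := by
  ext k u
  simp only [Matrix.mul_apply, shelfM, Bmat, shelfT]
  have hk := k.isLt
  have hu := u.isLt
  set S := fun t : Fin n => (if t.val ≤ u.val then
      (-1) ^ t.val * (u.val.factorial : ℝ) / (t.val.factorial : ℝ) *
      ((n - 1 - t.val).choose (u.val - t.val) : ℝ) else 0) with hS
  have hA (s : ℕ) : ∑ j : Fin n, (k.val.choose j.val : ℝ) * (j.val.descFactorial s : ℝ)
      = (k.val.descFactorial s : ℝ) * 2 ^ k.val * (1 / 2) ^ s := by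
    rw [Fin.sum_univ_eq_sum_range (fun j => (k.val.choose j : ℝ) * (j.descFactorial s : ℝ)),
      sum_range_choose_mul_descFactorial hk]
  have hB : ∑ j : Fin n, (k.val.choose (n - 1 - j.val) : ℝ) * (j.val.descFactorial u.val : ℝ)
      = ∑ t, S t * ((k.val.descFactorial t.val : ℝ) * 2 ^ k.val * (1 / 2) ^ t.val) := by
    -- Substitute `j ↦ n - 1 - j`, then expand the reflected falling factorial.
    rw [← Equiv.sum_comp Fin.revPerm]
    calc _ = ∑ j : Fin n, (k.val.choose j.val : ℝ) * ((n - 1 - j.val).descFactorial u.val : ℝ) := by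
          refine sum_congr rfl fun j _ => ?_
          have := j.isLt
          simp only [Fin.revPerm_apply, Fin.val_rev]
          rw [show n - 1 - (n - (j.val + 1)) = j.val by omega,
            show n - (j.val + 1) = n - 1 - j.val by omega]
      _ = ∑ j : Fin n, ∑ t, S t * ((k.val.choose j.val : ℝ) * (j.val.descFactorial t.val : ℝ)) := by
          refine sum_congr rfl fun j _ => ?_
          rw [descFactorial_reflect j.isLt hu, mul_sum]
          refine sum_congr rfl fun t _ => ?_
          simp only [hS]; ring
      _ = _ := by
          rw [sum_comm]
          refine sum_congr rfl fun t _ => ?_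
          rw [← mul_sum, hA]
  have h2 : (2 : ℝ) ^ k.val * (1 / 2) ^ k.val = 1 := by rw [← mul_pow]; norm_num
  calc _ = (1 / 2 : ℝ) ^ (k.val + 1) *
        (∑ j : Fin n, (k.val.choose j.val : ℝ) * (j.val.descFactorial u.val : ℝ) +
         ∑ j : Fin n, (k.val.choose (n - 1 - j.val) : ℝ) * (j.val.descFactorial u.val : ℝ)) := by
        rw [← sum_add_distrib, mul_sum]
        exact sum_congr rfl fun j _ => by ring
    _ = (1 / 2 : ℝ) * ((k.val.descFactorial u.val : ℝ) * (1 / 2) ^ u.val +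
          ∑ t, S t * ((k.val.descFactorial t.val : ℝ) * (1 / 2) ^ t.val)) := by
        rw [hA, hB]
        have : ∑ t, S t * ((k.val.descFactorial t.val : ℝ) * 2 ^ k.val * (1 / 2) ^ t.val)
          = 2 ^ k.val * ∑ t, S t * ((k.val.descFactorial t.val : ℝ) * (1 / 2) ^ t.val) := by
          rw [mul_sum]; exact sum_congr rfl fun t _ => by ring
        rw [this, pow_succ]
        linear_combination (1 / 2) * ((k.val.descFactorial u.val : ℝ) * (1 / 2) ^ u.val +
          ∑ t, S t * ((k.val.descFactorial t.val : ℝ) * (1 / 2) ^ t.val)) * h2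
    _ = _ := by
        have h3 : (k.val.descFactorial u.val : ℝ) * (1 / 2) ^ u.val
            = ∑ t, (if t = u then 1 else 0) * ((k.val.descFactorial t.val : ℝ) * (1 / 2) ^ t.val) := by
          simp
        rw [h3, ← sum_add_distrib, mul_sum]
        refine sum_congr rfl fun t _ => ?_
        simp only [hS, Fin.le_def]
        ring

lemma isUnit_det_Bmat (n : ℕ) : IsUnit (Bmat n).det := by
  rw [Matrix.det_of_isLowerTriangular, isUnit_iff_ne_zero, Finset.prod_ne_zero_iff]
  · intro i _
    simp [Bmat, Nat.descFactorial_self, Nat.factorial_ne_zero]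
  · intro i j hij
    have : i.val < j.val := hij
    simp [Bmat, Nat.descFactorial_eq_zero_iff_lt, this]

lemma conj_eq_shelfT (n : ℕ) : (Bmat n)⁻¹ * shelfM n * Bmat n = shelfT n := by
  rw [Matrix.mul_assoc, shelfM_mul_Bmat, ← Matrix.mul_assoc,
    Matrix.nonsing_inv_mul _ (isUnit_det_Bmat n), Matrix.one_mul]

/-! ### Binomial and Bernoulli identities -/

open Finset in
/-- The binomial identity behind the eigenvector equation: expand `(1 - 1/2) ^ (m + 1)`. -/
lemma sum_choose_succ_mul_neg_half (m : ℕ) :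
    ∑ s ∈ range (m + 1), ((m + 1).choose (s + 1) : ℝ) * (-1 / 2) ^ s = 2 - (1 / 2) ^ m := by
  have h := add_pow (-1 / 2 : ℝ) 1 (m + 1)
  rw [sum_range_succ'] at h
  simp only [one_pow, mul_one, pow_zero, Nat.choose_zero_right, Nat.cast_one] at h
  have h2 : ∑ s ∈ range (m + 1), (-1 / 2 : ℝ) ^ (s + 1) * ((m + 1).choose (s + 1) : ℝ)
      = (-1 / 2) * ∑ s ∈ range (m + 1), ((m + 1).choose (s + 1) : ℝ) * (-1 / 2) ^ s := by
    rw [mul_sum]; exact sum_congr rfl fun s _ => by ring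
  rw [h2, show (-1 / 2 + 1 : ℝ) = 1 / 2 by norm_num, pow_succ] at h
  linarith

open Finset in
/-- For even `m` this says `2 ^ (m + 1) (B_{m+1}(1/2) - B_{m+1}) = δ_{m,0}`; the Bernoulli polynomial
of odd degree vanishes at `1/2` by the reflection formula. -/
lemma sum_choose_mul_bernoulli {m : ℕ} (hm : Even m) :
    ∑ k ∈ range (m + 1), ((m + 1).choose k : ℚ) * 2 ^ k * bernoulli k
      = if m = 0 then 1 else 0 := by
  by_cases h0 : m = 0
  · subst h0; simp
  rw [if_neg h0]
  have hodd : Odd (m + 1) := hm.add_one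
  have hr := Polynomial.bernoulli_eval_one_sub (m + 1) (1 / 2)
  rw [hodd.neg_one_pow, show (1 - 1 / 2 : ℚ) = 1 / 2 by norm_num] at hr
  have hz : (Polynomial.bernoulli (m + 1)).eval (1 / 2 : ℚ) = 0 := by linarith
  rw [Polynomial.bernoulli, Polynomial.eval_finsetSum, sum_range_succ,
    bernoulli_eq_zero_of_odd hodd (by omega)] at hz
  simp only [Polynomial.eval_monomial, zero_mul, add_zero] at hz
  have h2 : ∀ k ∈ range (m + 1), ((m + 1).choose k : ℚ) * 2 ^ k * bernoulli k
      = 2 ^ (m + 1) * (bernoulli k * ((m + 1).choose k : ℚ) * (1 / 2) ^ (m + 1 - k)) := by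
    intro k hk
    have hk' : k ≤ m + 1 := by simp at hk; omega
    obtain ⟨q, hq⟩ := Nat.exists_eq_add_of_le hk'
    rw [show m + 1 - k = q by omega, hq, pow_add]
    have : (2 : ℚ) ^ q * (1 / 2) ^ q = 1 := by rw [← mul_pow]; norm_num
    linear_combination -((k + q).choose k : ℚ) * 2 ^ k * bernoulli k * this
  rw [sum_congr rfl h2, ← mul_sum, hz, mul_zero]

open Nat in
/-- The summand of `∑ t, w̃ t * T t u` at `t = i + s`, `u = i + s + q`, with `n - 1 = i + s + q + r`,
without the contribution of the identity-matrix term of `T`. -/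
lemma eigen_term (i s q r : ℕ) (hi : Even i) :
    (((s + 1 : ℕ) : ℝ)⁻¹ * ((i + s).choose i : ℝ) * ((s + q + r)! : ℝ) / ((q + r)! : ℝ)) *
      ((1 / 2 : ℝ) ^ (i + s + 1) * ((-1) ^ (i + s) * ((i + s + q)! : ℝ) / ((i + s)! : ℝ) *
        ((q + r).choose q : ℝ)))
    = ((s + q + r)! : ℝ) * ((i + s + q)! : ℝ) / ((i ! : ℝ) * (r ! : ℝ) * ((s + q + 1)! : ℝ)) *
      (1 / 2) ^ (i + 1) * (((s + q + 1).choose (s + 1) : ℝ) * (-1 / 2) ^ s) := by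
  rw [show s + q + 1 = (s + 1) + q by omega, Nat.cast_add_choose, Nat.cast_add_choose,
    Nat.cast_add_choose, pow_add (-1 : ℝ), hi.neg_one_pow, Nat.factorial_succ s,
    show (-1 / 2 : ℝ) = (-1) * (1 / 2) by ring, mul_pow, show i + s + 1 = i + 1 + s by omega,
    pow_add (1 / 2 : ℝ) (i + 1) s]
  have h1 := Nat.factorial_ne_zero s
  have h2 := Nat.factorial_ne_zero i
  have h3 := Nat.factorial_ne_zero q
  have h4 := Nat.factorial_ne_zero r
  have h5 := Nat.factorial_ne_zero (q + r)
  have h6 := Nat.factorial_ne_zero (i + s)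
  have h7 := Nat.factorial_ne_zero (s + 1 + q)
  push_cast
  field_simp

open Nat in
/-- The summand of `∑ t, w̃ t * w t` at `t = i + s`, `j = i + s + q`, with
`n - 1 = i + s + q + r`. -/
lemma dual_term (i s q r : ℕ) (b : ℝ) :
    (((s + 1 : ℕ) : ℝ)⁻¹ * ((i + s).choose i : ℝ) * ((s + q + r)! : ℝ) / ((q + r)! : ℝ)) *
      (2 ^ q * b * ((i + s + q).choose (i + s) : ℝ) * ((q + r)! : ℝ) / (r ! : ℝ))
    = ((s + q + r)! : ℝ) * ((i + s + q)! : ℝ) / ((i ! : ℝ) * (r ! : ℝ) * ((s + q + 1)! : ℝ)) *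
      (((s + q + 1).choose q : ℝ) * 2 ^ q * b) := by
  rw [show s + q + 1 = q + (s + 1) by omega, Nat.cast_add_choose, Nat.cast_add_choose,
    Nat.cast_add_choose, Nat.factorial_succ s]
  have h1 := Nat.factorial_ne_zero s
  have h2 := Nat.factorial_ne_zero i
  have h3 := Nat.factorial_ne_zero q
  have h4 := Nat.factorial_ne_zero r
  have h5 := Nat.factorial_ne_zero (q + r)
  have h6 := Nat.factorial_ne_zero (i + s)
  have h7 := Nat.factorial_ne_zero (q + (s + 1))
  push_cast
  field_simp

/-! ### Eigenvector equation and duality -/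

open Finset Nat in
lemma wTil_vecMul_shelfT (n i : ℕ) (hi : Even i) (u : Fin n) :
    ∑ t, wTil n i t * shelfT n t u = (1 / 2 : ℝ) ^ i * wTil n i u := by
  have hu := u.isLt
  by_cases hiu : i ≤ u.val
  swap
  · rw [sum_eq_zero]
    · simp [wTil, hiu]
    · intro t _
      by_cases hit : i ≤ t.val
      · have h1 : t ≠ u := by rintro rfl; exact hiu hit
        have h2 : ¬ t ≤ u := fun h => hiu (hit.trans h)
        simp [shelfT, h1, h2]
      · simp [wTil, hit]
  obtain ⟨m, hm⟩ := Nat.exists_eq_add_of_le hiu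
  obtain ⟨r, hr⟩ : ∃ r, n = i + m + r + 1 := ⟨n - 1 - u.val, by omega⟩
  -- The part of the summand coming from the reflected half of `T`, as a function on `ℕ` supported on
  -- `[i, u]`.
  let F : ℕ → ℝ := fun t => if i ≤ t ∧ t ≤ i + m then
          (((t - i + 1 : ℕ) : ℝ)⁻¹ * (t.choose i : ℝ) * ((n - 1 - i)! : ℝ) /
            ((n - 1 - t)! : ℝ)) * ((1 / 2 : ℝ) ^ (t + 1) *
          ((-1) ^ t * ((i + m)! : ℝ) / (t ! : ℝ) * ((n - 1 - t).choose (i + m - t) : ℝ)))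
          else 0
  have hsplit : ∀ t, wTil n i t * shelfT n t u
      = (if t = u then wTil n i u * (1 / 2) ^ (u.val + 1) else 0) +
        F t.val := by
    intro t
    have e1 : t ≤ u ↔ t.val ≤ i + m := by rw [Fin.le_def, hm]
    simp only [shelfT, e1, hm, mul_add]
    congr 1
    · by_cases h : t = u
      · subst h; simp [hm]
      · simp [h]
    · by_cases h : i ≤ t.val <;> by_cases h' : t.val ≤ i + m <;> simp [F, wTil, h, h']
  rw [sum_congr rfl fun t _ => hsplit t, sum_add_distrib, sum_ite_eq' univ u,
    sum_fin_eq_sum_shift (i := i) (m := m) (by omega) F]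
  rotate_left
  · intro t ht; exact if_neg (by omega)
  · intro t ht; exact if_neg (by omega)
  have hterm : ∀ s ∈ range (m + 1), F (i + s) =
        ((m + r)! : ℝ) * ((i + m)! : ℝ) / ((i ! : ℝ) * (r ! : ℝ) * ((m + 1)! : ℝ)) *
      (1 / 2) ^ (i + 1) * (((m + 1).choose (s + 1) : ℝ) * (-1 / 2) ^ s) := by
    intro s hs
    have hs' : s ≤ m := by simp at hs; omega
    obtain ⟨q, rfl⟩ := Nat.exists_eq_add_of_le hs'
    simp only [F]
    rw [if_pos (by omega), show i + s - i = s by omega, show n - 1 - i = s + q + r by omega,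
      show n - 1 - (i + s) = q + r by omega, show i + (s + q) - (i + s) = q by omega,
      ← add_assoc i s q]
    exact eigen_term i s q r hi
  rw [sum_congr rfl hterm, ← mul_sum, sum_choose_succ_mul_neg_half]
  have hw : wTil n i u
      = ((m + r)! : ℝ) * ((i + m)! : ℝ) / ((i ! : ℝ) * (r ! : ℝ) * ((m + 1)! : ℝ)) := by
    rw [wTil, if_pos hiu, hm, show i + m - i = m by omega, show n - 1 - i = m + r by omega,
      show n - 1 - (i + m) = r by omega, Nat.cast_add_choose, Nat.factorial_succ m]
    have h1 := Nat.factorial_ne_zero m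
    have h2 := Nat.factorial_ne_zero i
    have h4 := Nat.factorial_ne_zero r
    push_cast
    field_simp
  simp only [mem_univ, if_true]
  rw [← hw, hm, show i + m + 1 = i + 1 + m by omega, pow_add _ (i + 1) m, pow_succ]
  ring

open Finset Nat in
lemma sum_wTil_mul_wVec (n i j : ℕ) (hj : j < n) (hi : Even i) (hje : Even j) :
    ∑ t : Fin n, wTil n i t * wVec n j t = if i = j then 1 else 0 := by
  by_cases hij : i ≤ j
  swap
  · rw [sum_eq_zero, if_neg (by omega)]
    intro t _
    by_cases hit : i ≤ t.val
    · have : ¬ t.val ≤ j := by omega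
      simp [wVec, this]
    · simp [wTil, hit]
  obtain ⟨m, rfl⟩ := Nat.exists_eq_add_of_le hij
  obtain ⟨r, hr⟩ : ∃ r, n = i + m + r + 1 := ⟨n - 1 - (i + m), by omega⟩
  have hm : Even m := by
    rw [Nat.even_add] at hje; exact hje.mp hi
  simp only [wTil, wVec]
  rw [sum_fin_eq_sum_shift (i := i) (m := m) hj (fun t => (if i ≤ t then
      ((t - i + 1 : ℕ) : ℝ)⁻¹ * (Nat.choose t i : ℝ) *
        (Nat.factorial (n - 1 - i) : ℝ) / (Nat.factorial (n - 1 - t) : ℝ) else 0) *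
      (if t ≤ i + m then
      (2 : ℝ)^(i + m - t) * ((bernoulli (i + m - t) : ℚ) : ℝ) * (Nat.choose (i + m) t : ℝ) *
        (Nat.factorial (n - t - 1) : ℝ) / (Nat.factorial (n - (i + m) - 1) : ℝ) else 0))]
  rotate_left
  · intro t ht; rw [if_neg (by omega), zero_mul]
  · intro t ht; rw [if_neg (c := t ≤ i + m) (by omega), mul_zero]
  -- Index by `q = j - t`, the index of the Bernoulli number, instead of `s = t - i`.
  rw [← sum_range_reflect]
  have hterm : ∀ q ∈ range (m + 1), (fun s => (if i ≤ i + s then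
      ((i + s - i + 1 : ℕ) : ℝ)⁻¹ * (Nat.choose (i + s) i : ℝ) *
        (Nat.factorial (n - 1 - i) : ℝ) / (Nat.factorial (n - 1 - (i + s)) : ℝ) else 0) *
      (if i + s ≤ i + m then
      (2 : ℝ)^(i + m - (i + s)) * ((bernoulli (i + m - (i + s)) : ℚ) : ℝ) *
        (Nat.choose (i + m) (i + s) : ℝ) *
        (Nat.factorial (n - (i + s) - 1) : ℝ) / (Nat.factorial (n - (i + m) - 1) : ℝ) else 0))
        (m + 1 - 1 - q)
      = ((m + r)! : ℝ) * ((i + m)! : ℝ) / ((i ! : ℝ) * (r ! : ℝ) * ((m + 1)! : ℝ)) *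
      (((m + 1).choose q : ℝ) * 2 ^ q * ((bernoulli q : ℚ) : ℝ)) := by
    intro q hq
    have hq' : q ≤ m := by simp at hq; omega
    obtain ⟨s, rfl⟩ := Nat.exists_eq_add_of_le' hq'
    rw [show s + q + 1 - 1 - q = s by omega]
    beta_reduce
    rw [if_pos (by omega), if_pos (by omega), show i + s - i = s by omega,
      show n - 1 - i = s + q + r by omega,
      show n - 1 - (i + s) = q + r by omega, show i + (s + q) - (i + s) = q by omega,
      show n - (i + s) - 1 = q + r by omega, show n - (i + (s + q)) - 1 = r by omega,
      ← add_assoc i s q]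
    exact dual_term i s q r _
  rw [sum_congr rfl hterm, ← mul_sum]
  have hb : ∑ k ∈ range (m + 1), ((m + 1).choose k : ℝ) * 2 ^ k * ((bernoulli k : ℚ) : ℝ)
      = if m = 0 then 1 else 0 := by
    have h := congrArg (fun x : ℚ => (x : ℝ)) (sum_choose_mul_bernoulli hm)
    push_cast at h
    rw [h]
    split_ifs <;> simp
  rw [hb]
  by_cases h0 : m = 0
  · subst h0
    have h2 := Nat.factorial_ne_zero i
    have h4 := Nat.factorial_ne_zero r
    simp
    field_simp
  · simp [h0]

theorem wTil_left_eigenvector_and_duality (n : ℕ) (hn : 2 ≤ n) :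
    (∀ i : ℕ, i ≤ n - 1 → Even i →
      Matrix.vecMul (wTil n i) ((Bmat n)⁻¹ * shelfM n * Bmat n) = ((1/2 : ℝ)^i) • wTil n i) ∧
    (∀ i j : ℕ, i ≤ n - 1 → j ≤ n - 1 → Even i → Even j →
      ∑ t : Fin n, wTil n i t * wVec n j t = if i = j then 1 else 0) := by
  refine ⟨fun i _ hi => ?_, fun i j _ hj hi hje => sum_wTil_mul_wVec n i j (by omega) hi hje⟩
  rw [conj_eq_shelfT]
  ext u
  exact wTil_vecMul_shelfT n i hi u
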